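/- arXiv:1208.3811 — 2 statements merged into one kernel-verified Lean document; each statement's English description precedes it below -/
import Mathlib

section
/- Let 𝒳 and 𝒲 be standard Borel spaces, R a probability measure on 𝒲, f : 𝒳 × 𝒲 → 𝒳 measurable with t-step transition maps F_t, and P_* a nominal invariant state distribution ((P_* × R) ∘ f⁻¹ = P_*). Let Φ ≪ P_* be a probability measure on 𝒳 and κ a Markov kernel from 𝒳 to 𝒲^t with κ(x) ≪ R^{⊗t} for Φ-almost every x. Set μ := Φ ⊗ κ, ν := P_* × R^{⊗t}, and P_t := μ ∘ F_t⁻¹. Let θ and θ_* be the disintegration (conditional distribution) kernels of the pushforwards of μ and ν, respectively, under the map y ↦ (F_t(y), y) from 𝒳 × 𝒲^t to 𝒳 × (𝒳 × 𝒲^t), i.e. the conditional laws of the state-noise sequence given the terminal state. Then the conditional relative entropy balance equation holds in [0,∞]: ∫_𝒳 D(κ(x) ‖ R^{⊗t}) dΦ(x) + D(Φ ‖ P_*) = D(P_t ‖ P_*) + ∫_𝒳 D(θ(z) ‖ θ_*(z)) dP_t(z). -/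
/-!
Let `μ = Φ ⊗ κ`, `ν = P_* × R^{⊗t}`. Both sides equal `D(μ ‖ ν)`, expanded by the chain rule for
relative entropy in two ways: the left-hand side conditions on the initial state; for the right-hand
side one first embeds by `y ↦ (F_t y, y)`, which preserves relative entropy because `y` can be read
off its image, and conditions on the terminal state. Invariance of `P_*` under `f` makes `P_*` the
terminal marginal of `ν`.
-/

open MeasureTheory ProbabilityTheory
open scoped ENNReal ProbabilityTheory Classical

/-- Kullback-Leibler divergence `D(P ‖ Q)`, valued in `[0,∞]`.  For probability measures with
`P ≪ Q` it equals `∫ log (dP/dQ) dP`, computed here in the equivalent nonnegative form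
`∫⁻ (φ log φ - φ + 1) dQ` where `φ = dP/dQ`; it is `∞` when `¬ P ≪ Q`. -/
noncomputable def klDiv {α : Type*} [MeasurableSpace α] (P Q : Measure α) : ℝ≥0∞ :=
  if P ≪ Q then
    ∫⁻ x, ENNReal.ofReal ((P.rnDeriv Q x).toReal * Real.log (P.rnDeriv Q x).toReal
      - (P.rnDeriv Q x).toReal + 1) ∂Q
  else ∞

/-- The `t`-step state transition maps: `F 0 (x, _) = x` and
`F (k+1) (x, w₀, …, w_k) = f (F k (x, w₀, …, w_{k-1}), w_k)`. -/
def stateTrans {𝒳 𝒲 : Type*} (f : 𝒳 × 𝒲 → 𝒳) : (t : ℕ) → 𝒳 × (Fin t → 𝒲) → 𝒳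
  | 0, p => p.1
  | t + 1, p => f (stateTrans f t (p.1, fun i => p.2 i.castSucc), p.2 (Fin.last t))

lemma countablyGenerated_pi {ι : Type*} [Countable ι] {α : ι → Type*}
    [∀ i, MeasurableSpace (α i)] [∀ i, MeasurableSpace.CountablyGenerated (α i)] :
    MeasurableSpace.CountablyGenerated (∀ i, α i) := by
  have hcomap (i : ι) := MeasurableSpace.CountablyGenerated.comap fun x : ∀ i, α i => x i
  choose b hb_countable hb_gen using fun i => (hcomap i).isCountablyGenerated
  refine ⟨⋃ i, b i, Set.countable_iUnion hb_countable, ?_⟩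
  rw [← MeasurableSpace.iSup_generateFrom]
  exact iSup_congr hb_gen

section RelativeEntropy

variable {α β : Type*} {mα : MeasurableSpace α} {mβ : MeasurableSpace β} {μ ν : Measure α}

lemma lintegral_klDiv_eq_top_of_not_ae_ac [MeasurableSpace.CountableOrCountablyGenerated α β]
    {κ η : Kernel α β} [IsFiniteKernel κ] [IsFiniteKernel η]
    (h : ¬ ∀ᵐ x ∂μ, κ x ≪ η x) : ∫⁻ x, InformationTheory.klDiv (κ x) (η x) ∂μ = ∞ := by
  set s : Set α := {x | κ x ≪ η x}ᶜ
  have hs : MeasurableSet s := (Kernel.measurableSet_absolutelyContinuous κ η).compl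
  -- The integrand need not be measurable, so it is bounded below by a measurable function.
  have hle : s.indicator (fun _ => ∞) ≤ fun x => InformationTheory.klDiv (κ x) (η x) :=
    Set.indicator_le fun _ hx => (InformationTheory.klDiv_of_not_ac hx).ge
  refine top_unique ?_
  calc ∞ = ∫⁻ x, s.indicator (fun _ => ∞) x ∂μ := by
        rw [lintegral_indicator_const hs, ENNReal.top_mul h]
    _ ≤ ∫⁻ x, InformationTheory.klDiv (κ x) (η x) ∂μ := lintegral_mono hle

variable [IsFiniteMeasure μ] [IsFiniteMeasure ν]

lemma klDiv_eq_informationTheory_klDiv : klDiv μ ν = InformationTheory.klDiv μ ν := by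
  rw [klDiv, InformationTheory.klDiv_eq_lintegral_klFun]
  simp only [InformationTheory.klFun_apply, sub_add_eq_add_sub]

lemma klDiv_map_of_leftInverse {g : α → β} {h : β → α} (hg : Measurable g) (hh : Measurable h)
    (hgh : Function.LeftInverse h g) :
    InformationTheory.klDiv (μ.map g) (ν.map g) = InformationTheory.klDiv μ ν := by
  have map_map_eq (ρ : Measure α) : (ρ.map g).map h = ρ := by
    rw [Measure.map_map hh hg, hgh.comp_eq_id, Measure.map_id]
  refine le_antisymm (InformationTheory.klDiv_map_le μ ν hg) ?_
  simpa only [map_map_eq] using InformationTheory.klDiv_map_le (μ.map g) (ν.map g) hh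

section Kernel

variable [MeasurableSpace.CountableOrCountablyGenerated α β] {κ η : Kernel α β}

lemma rnDeriv_compProd_right [IsFiniteKernel κ] [IsFiniteKernel η] (h : ∀ᵐ x ∂μ, κ x ≪ η x) :
    (μ ⊗ₘ κ).rnDeriv (μ ⊗ₘ η) =ᵐ[μ ⊗ₘ η] fun p => κ.rnDeriv η p.1 p.2 := by
  have hmeas : Measurable fun p : α × β => κ.rnDeriv η p.1 p.2 := Kernel.measurable_rnDeriv κ η
  have hκ : κ =ᵐ[μ] η.withDensity (κ.rnDeriv η) :=
    h.mono fun _ hx => (Kernel.withDensity_rnDeriv_eq hx).symm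
  rw [Measure.compProd_congr hκ, Measure.compProd_withDensity hmeas]
  exact Measure.rnDeriv_withDensity _ hmeas

lemma klDiv_compProd_right [IsFiniteKernel κ] [IsFiniteKernel η] :
    InformationTheory.klDiv (μ ⊗ₘ κ) (μ ⊗ₘ η)
      = ∫⁻ x, InformationTheory.klDiv (κ x) (η x) ∂μ := by
  by_cases hac : ∀ᵐ x ∂μ, κ x ≪ η x
  swap
  · rw [lintegral_klDiv_eq_top_of_not_ae_ac hac, InformationTheory.klDiv_of_not_ac]
    rwa [Measure.absolutelyContinuous_compProd_right_iff]
  calc InformationTheory.klDiv (μ ⊗ₘ κ) (μ ⊗ₘ η)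
    _ = ∫⁻ p, ENNReal.ofReal
          (InformationTheory.klFun ((μ ⊗ₘ κ).rnDeriv (μ ⊗ₘ η) p).toReal) ∂(μ ⊗ₘ η) :=
      InformationTheory.klDiv_eq_lintegral_klFun_of_ac
        (Measure.absolutelyContinuous_compProd_right_iff.mpr hac)
    _ = ∫⁻ p, ENNReal.ofReal
          (InformationTheory.klFun (κ.rnDeriv η p.1 p.2).toReal) ∂(μ ⊗ₘ η) :=
      lintegral_congr_ae <| (rnDeriv_compProd_right hac).mono fun _ hp => by simp only [hp]
    _ = ∫⁻ x, ∫⁻ y, ENNReal.ofReal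
          (InformationTheory.klFun (κ.rnDeriv η x y).toReal) ∂(η x) ∂μ :=
      Measure.lintegral_compProd (by fun_prop)
    _ = ∫⁻ x, InformationTheory.klDiv (κ x) (η x) ∂μ := by
      refine lintegral_congr_ae (hac.mono fun x hx => ?_)
      simp only [InformationTheory.klDiv_eq_lintegral_klFun_of_ac hx]
      exact lintegral_congr_ae <|
        (Kernel.rnDeriv_eq_rnDeriv_measure (κ := κ)).mono fun _ hy => by simp only [hy]

variable (μ ν κ η) in
lemma klDiv_compProd [IsMarkovKernel κ] [IsMarkovKernel η] :
    InformationTheory.klDiv (μ ⊗ₘ κ) (ν ⊗ₘ η)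
      = InformationTheory.klDiv μ ν + ∫⁻ x, InformationTheory.klDiv (κ x) (η x) ∂μ := by
  rw [InformationTheory.klDiv_compProd_eq_add, klDiv_compProd_right]

end Kernel

lemma klDiv_eq_klDiv_map_add_lintegral [MeasurableSpace.CountableOrCountablyGenerated β α]
    {g : α → β} (hg : Measurable g) {θ η : Kernel β α} [IsMarkovKernel θ] [IsMarkovKernel η]
    (hθ : μ.map g ⊗ₘ θ = μ.map fun y => (g y, y)) (hη : ν.map g ⊗ₘ η = ν.map fun y => (g y, y)) :
    InformationTheory.klDiv μ ν = InformationTheory.klDiv (μ.map g) (ν.map g)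
      + ∫⁻ z, InformationTheory.klDiv (θ z) (η z) ∂(μ.map g) := by
  rw [← klDiv_compProd, hθ, hη]
  exact (klDiv_map_of_leftInverse (hg.prodMk measurable_id) measurable_snd fun _ => rfl).symm

end RelativeEntropy

lemma measurePreserving_prod_pi_init_last {α β : Type*} [MeasurableSpace α] [MeasurableSpace β]
    {n : ℕ} (μ : Measure α) [SFinite μ] (ν : Fin (n + 1) → Measure β) [∀ i, SigmaFinite (ν i)] :
    MeasurePreserving (fun p : α × (Fin (n + 1) → β) => ((p.1, Fin.init p.2), p.2 (Fin.last n)))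
      (μ.prod (Measure.pi ν))
      ((μ.prod (Measure.pi fun i : Fin n => ν i.castSucc)).prod (ν (Fin.last n))) := by
  have hsplit := measurePreserving_piFinSuccAbove ν (Fin.last n)
  simp only [Fin.succAbove_last] at hsplit
  have h := (measurePreserving_prodAssoc μ (Measure.pi fun i : Fin n => ν i.castSucc)
    (ν (Fin.last n))).symm.comp
      ((MeasurePreserving.id μ).prod (Measure.measurePreserving_swap.comp hsplit))
  convert h using 1
  funext p
  simp [MeasurableEquiv.prodAssoc, MeasurableEquiv.piFinSuccAbove, Fin.insertNthEquiv]

lemma measurePreserving_stateTrans {𝒳 𝒲 : Type*} [MeasurableSpace 𝒳] [MeasurableSpace 𝒲]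
    {P : Measure 𝒳} {R : Measure 𝒲} [SFinite P] [SigmaFinite R] {f : 𝒳 × 𝒲 → 𝒳}
    (hf : MeasurePreserving f (P.prod R) P) (t : ℕ) :
    MeasurePreserving (stateTrans f t) (P.prod (Measure.pi fun _ => R)) P := by
  induction t with
  | zero =>
    rw [Measure.pi_of_empty]
    exact measurePreserving_fst
  | succ t ih =>
    exact hf.comp <| (ih.prod (.id R)).comp <| measurePreserving_prod_pi_init_last P fun _ => R

theorem relative_entropy_balance_general
    {𝒳 𝒲 : Type*} [MeasurableSpace 𝒳] [MeasurableSpace.CountablyGenerated 𝒳]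
    [MeasurableSpace 𝒲] [MeasurableSpace.CountablyGenerated 𝒲]
    (R : Measure 𝒲) [IsProbabilityMeasure R]
    (f : 𝒳 × 𝒲 → 𝒳) (hf : Measurable f)
    (Pstar : Measure 𝒳) [IsFiniteMeasure Pstar]
    (hinv : (Pstar.prod R).map f = Pstar)
    (t : ℕ)
    (Φ : Measure 𝒳) [IsFiniteMeasure Φ]
    (κ : Kernel 𝒳 (Fin t → 𝒲)) [IsMarkovKernel κ]
    (θ θstar : Kernel 𝒳 (𝒳 × (Fin t → 𝒲))) [IsMarkovKernel θ] [IsMarkovKernel θstar]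
    (hθ : (((Φ ⊗ₘ κ).map fun y => (stateTrans f t y, y)).fst ⊗ₘ θ)
        = (Φ ⊗ₘ κ).map fun y => (stateTrans f t y, y))
    (hθstar : (((Pstar.prod (Measure.pi fun _ => R)).map fun y => (stateTrans f t y, y)).fst
          ⊗ₘ θstar)
        = (Pstar.prod (Measure.pi fun _ => R)).map fun y => (stateTrans f t y, y)) :
    (∫⁻ x, klDiv (κ x) (Measure.pi fun _ => R) ∂Φ) + klDiv Φ Pstar
      = klDiv ((Φ ⊗ₘ κ).map (stateTrans f t)) Pstar
        + ∫⁻ z, klDiv (θ z) (θstar z) ∂((Φ ⊗ₘ κ).map (stateTrans f t)) := by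
  have : MeasurableSpace.CountablyGenerated (Fin t → 𝒲) := countablyGenerated_pi
  have hF : MeasurePreserving (stateTrans f t) (Pstar.prod (Measure.pi fun _ => R)) Pstar :=
    measurePreserving_stateTrans ⟨hf, hinv⟩ t
  rw [Measure.fst_map_prodMk measurable_id'] at hθ hθstar
  have initial := klDiv_compProd Φ Pstar κ (Kernel.const 𝒳 (Measure.pi fun _ => R))
  have terminal := klDiv_eq_klDiv_map_add_lintegral hF.measurable hθ hθstar
  simp only [Measure.compProd_const, Kernel.const_apply] at initial
  rw [hF.map_eq] at terminal
  simp only [klDiv_eq_informationTheory_klDiv]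
  rw [add_comm, ← initial, terminal]

/-- Conditional relative entropy balance equation:
`∫ D(κ(x) ‖ R^{⊗t}) dΦ(x) + D(Φ ‖ P_*) = D(P_t ‖ P_*) + ∫ D(θ(z) ‖ θ_*(z)) dP_t(z)`,
where `θ` and `θ_*` are the disintegration kernels (conditional laws of the state-noise
sequence given the terminal state) of the pushforwards of `μ = Φ ⊗ κ` and
`ν = P_* × R^{⊗t}` under `y ↦ (F_t y, y)`. -/
theorem relative_entropy_balance
    {𝒳 𝒲 : Type*} [MeasurableSpace 𝒳] [StandardBorelSpace 𝒳]
    [MeasurableSpace 𝒲] [StandardBorelSpace 𝒲]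
    (R : Measure 𝒲) [IsProbabilityMeasure R]
    (f : 𝒳 × 𝒲 → 𝒳) (hf : Measurable f)
    (Pstar : Measure 𝒳) [IsProbabilityMeasure Pstar]
    (hinv : (Pstar.prod R).map f = Pstar)
    (t : ℕ)
    (Φ : Measure 𝒳) [IsProbabilityMeasure Φ] (hΦ : Φ ≪ Pstar)
    (κ : Kernel 𝒳 (Fin t → 𝒲)) [IsMarkovKernel κ]
    (hκ : ∀ᵐ x ∂Φ, κ x ≪ Measure.pi fun _ => R)
    (θ θstar : Kernel 𝒳 (𝒳 × (Fin t → 𝒲))) [IsMarkovKernel θ] [IsMarkovKernel θstar]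
    (hθ : (((Φ ⊗ₘ κ).map fun y => (stateTrans f t y, y)).fst ⊗ₘ θ)
        = (Φ ⊗ₘ κ).map fun y => (stateTrans f t y, y))
    (hθstar : (((Pstar.prod (Measure.pi fun _ => R)).map fun y => (stateTrans f t y, y)).fst
          ⊗ₘ θstar)
        = (Pstar.prod (Measure.pi fun _ => R)).map fun y => (stateTrans f t y, y)) :
    (∫⁻ x, klDiv (κ x) (Measure.pi fun _ => R) ∂Φ) + klDiv Φ Pstar
      = klDiv ((Φ ⊗ₘ κ).map (stateTrans f t)) Pstar
        + ∫⁻ z, klDiv (θ z) (θstar z) ∂((Φ ⊗ₘ κ).map (stateTrans f t)) :=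
  relative_entropy_balance_general R f hf Pstar hinv t Φ κ θ θstar hθ hθstar
end

section
/- Let 𝒴, 𝒳, 𝒲 be standard Borel spaces, μ a probability measure on 𝒴 × 𝒲, g : 𝒴 → 𝒳 a measurable map, and R a probability measure on 𝒲. Let μ' be the pushforward of μ under (y, w) ↦ (g(y), w). Let κ_Y be the disintegration kernel of μ (the conditional law of the second coordinate given the first) and κ_X the disintegration kernel of μ'. Then coarsening the conditioning does not increase conditional relative entropy: ∫_𝒳 D(κ_X(x) ‖ R) d(μ'∘fst⁻¹)(x) ≤ ∫_𝒴 D(κ_Y(y) ‖ R) d(μ∘fst⁻¹)(y), with both sides valued in [0,∞]. -/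
open MeasureTheory ProbabilityTheory
open scoped ENNReal ProbabilityTheory Classical

/-!
By the chain rule, `∫ D(κ(x) ‖ η(x)) dν(x) = D(ν ⊗ κ ‖ ν ⊗ η)`, so both sides of the inequality are
divergences between joint laws. The map `(y, w) ↦ (g y, w)` carries the pair `μ`, `μ.fst ⊗ R` on
`𝒴 × 𝒲` to the corresponding pair on `𝒳 × 𝒲`, and divergence does not increase under pushforward.
Nothing changes if `R` is replaced by a kernel `η` on `𝒳`, pulled back to `𝒴` along `g`.
-/

section Divergence

variable {α β : Type*} [MeasurableSpace α] [MeasurableSpace β]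

theorem klDiv_of_absolutelyContinuous {P Q : Measure α} (h : P ≪ Q) :
    klDiv P Q = ∫⁻ x, ENNReal.ofReal (InformationTheory.klFun (P.rnDeriv Q x).toReal) ∂Q := by
  simp only [klDiv, if_pos h, InformationTheory.klFun_apply, sub_add_eq_add_sub]

theorem klDiv_of_not_absolutelyContinuous {P Q : Measure α} (h : ¬ P ≪ Q) : klDiv P Q = ∞ :=
  if_neg h

theorem klDiv_eq_informationTheory_klDiv_s2 (P Q : Measure α) [IsFiniteMeasure P]
    [IsFiniteMeasure Q] : klDiv P Q = InformationTheory.klDiv P Q := by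
  by_cases h : P ≪ Q
  · rw [klDiv_of_absolutelyContinuous h, InformationTheory.klDiv_eq_lintegral_klFun_of_ac h]
  · rw [klDiv_of_not_absolutelyContinuous h, InformationTheory.klDiv_of_not_ac h]

theorem klDiv_map_le (P Q : Measure α) [IsFiniteMeasure P] [IsFiniteMeasure Q] {f : α → β}
    (hf : Measurable f) : klDiv (P.map f) (Q.map f) ≤ klDiv P Q := by
  simpa only [klDiv_eq_informationTheory_klDiv_s2] using InformationTheory.klDiv_map_le P Q hf

end Divergence

section CompProd

variable {α β : Type*} [MeasurableSpace α] [MeasurableSpace β]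

theorem sigmaFinite_compProd (ν : Measure α) [SigmaFinite ν] (η : Kernel α β)
    [IsFiniteKernel η] : SigmaFinite (ν ⊗ₘ η) := by
  refine ⟨⟨⟨fun n ↦ Prod.fst ⁻¹' spanningSets ν n, fun _ ↦ trivial, fun n ↦ ?_, ?_⟩⟩⟩
  · rw [← Set.prod_univ, Measure.compProd_apply_prod (measurableSet_spanningSets ν n) .univ]
    calc ∫⁻ x in spanningSets ν n, η x Set.univ ∂ν
      _ ≤ ∫⁻ _ in spanningSets ν n, η.bound ∂ν :=
          lintegral_mono fun x ↦ Kernel.measure_le_bound η x _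
      _ = η.bound * ν (spanningSets ν n) := setLIntegral_const _ _
      _ < ∞ := ENNReal.mul_lt_top η.bound_lt_top (measure_spanningSets_lt_top ν n)
  · rw [← Set.preimage_iUnion, iUnion_spanningSets, Set.preimage_univ]

variable [MeasurableSpace.CountableOrCountablyGenerated α β]
  {ν : Measure α} {κ η : Kernel α β} [IsFiniteKernel κ] [IsFiniteKernel η]

theorem compProd_eq_withDensity_kernel_rnDeriv [SFinite ν] (h : ∀ᵐ x ∂ν, κ x ≪ η x) :
    ν ⊗ₘ κ = (ν ⊗ₘ η).withDensity fun p ↦ κ.rnDeriv η p.1 p.2 := by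
  rw [← Measure.compProd_withDensity (Kernel.measurable_rnDeriv κ η)]
  refine Measure.compProd_congr ?_
  filter_upwards [h] with x hx using (Kernel.withDensity_rnDeriv_eq hx).symm

theorem rnDeriv_compProd_right_ae_eq [SigmaFinite ν] (h : ∀ᵐ x ∂ν, κ x ≪ η x) :
    (ν ⊗ₘ κ).rnDeriv (ν ⊗ₘ η) =ᵐ[ν ⊗ₘ η] fun p ↦ κ.rnDeriv η p.1 p.2 := by
  have := sigmaFinite_compProd ν η
  rw [compProd_eq_withDensity_kernel_rnDeriv h]
  exact Measure.rnDeriv_withDensity _ (Kernel.measurable_rnDeriv κ η)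

theorem klDiv_compProd_right_of_ae_absolutelyContinuous [SigmaFinite ν]
    (h : ∀ᵐ x ∂ν, κ x ≪ η x) :
    klDiv (ν ⊗ₘ κ) (ν ⊗ₘ η) = ∫⁻ x, klDiv (κ x) (η x) ∂ν := by
  calc klDiv (ν ⊗ₘ κ) (ν ⊗ₘ η)
    _ = ∫⁻ p, ENNReal.ofReal (InformationTheory.klFun
          ((ν ⊗ₘ κ).rnDeriv (ν ⊗ₘ η) p).toReal) ∂(ν ⊗ₘ η) :=
        klDiv_of_absolutelyContinuous (Measure.absolutelyContinuous_compProd_right_iff.mpr h)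
    _ = ∫⁻ p, ENNReal.ofReal (InformationTheory.klFun
          (κ.rnDeriv η p.1 p.2).toReal) ∂(ν ⊗ₘ η) := by
        refine lintegral_congr_ae ?_
        filter_upwards [rnDeriv_compProd_right_ae_eq h] with p hp
        rw [hp]
    _ = ∫⁻ x, ∫⁻ w, ENNReal.ofReal (InformationTheory.klFun
          (κ.rnDeriv η x w).toReal) ∂(η x) ∂ν :=
        Measure.lintegral_compProd (by fun_prop)
    _ = ∫⁻ x, klDiv (κ x) (η x) ∂ν := by
        refine lintegral_congr_ae ?_
        filter_upwards [h] with x hx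
        rw [klDiv_of_absolutelyContinuous hx]
        refine lintegral_congr_ae ?_
        filter_upwards [Kernel.rnDeriv_eq_rnDeriv_measure (κ := κ) (η := η) (a := x)] with w hw
        rw [hw]

theorem lintegral_klDiv_eq_top_of_not_ae_absolutelyContinuous (h : ¬ ∀ᵐ x ∂ν, κ x ≪ η x) :
    ∫⁻ x, klDiv (κ x) (η x) ∂ν = ∞ := by
  set S : Set α := {x | κ x ≪ η x}ᶜ
  have hS : MeasurableSet S := (Kernel.measurableSet_absolutelyContinuous κ η).compl
  have hνS : ν S ≠ 0 := h
  refine top_le_iff.mp ?_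
  calc ∞
    _ = ∫⁻ _ in S, ∞ ∂ν := by rw [setLIntegral_const, ENNReal.top_mul hνS]
    _ ≤ ∫⁻ x in S, klDiv (κ x) (η x) ∂ν :=
        setLIntegral_mono' hS fun x hx ↦ (klDiv_of_not_absolutelyContinuous hx).ge
    _ ≤ ∫⁻ x, klDiv (κ x) (η x) ∂ν := setLIntegral_le_lintegral _ _

theorem klDiv_compProd_right_s2 (ν : Measure α) [SigmaFinite ν] (κ η : Kernel α β)
    [IsFiniteKernel κ] [IsFiniteKernel η] :
    klDiv (ν ⊗ₘ κ) (ν ⊗ₘ η) = ∫⁻ x, klDiv (κ x) (η x) ∂ν := by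
  by_cases h : ∀ᵐ x ∂ν, κ x ≪ η x
  · exact klDiv_compProd_right_of_ae_absolutelyContinuous h
  · rw [lintegral_klDiv_eq_top_of_not_ae_absolutelyContinuous h]
    exact klDiv_of_not_absolutelyContinuous
      (mt Measure.absolutelyContinuous_compProd_right_iff.mp h)

end CompProd

section Coarsening

variable {𝒴 𝒳 𝒲 : Type*} [MeasurableSpace 𝒴] [MeasurableSpace 𝒳] [MeasurableSpace 𝒲]
  {g : 𝒴 → 𝒳}

theorem fst_map_prodMap_id (μ : Measure (𝒴 × 𝒲)) (hg : Measurable g) :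
    (μ.map fun p ↦ (g p.1, p.2)).fst = μ.fst.map g := by
  rw [Measure.fst_map_prodMk measurable_snd, Measure.fst, Measure.map_map hg measurable_fst]
  rfl

theorem map_compProd_comap (ν : Measure 𝒴) [SFinite ν] (η : Kernel 𝒳 𝒲) [IsSFiniteKernel η]
    (hg : Measurable g) :
    (ν ⊗ₘ η.comap g hg).map (fun p ↦ (g p.1, p.2)) = ν.map g ⊗ₘ η := by
  have hG : Measurable fun p : 𝒴 × 𝒲 ↦ (g p.1, p.2) := by fun_prop
  ext s hs
  rw [Measure.map_apply hG hs, Measure.compProd_apply (hG hs), Measure.compProd_apply hs,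
    lintegral_map (Kernel.measurable_kernel_prodMk_left hs) hg]
  rfl

theorem coarsening_decreases_conditional_relative_entropy_general
    [MeasurableSpace.CountableOrCountablyGenerated 𝒴 𝒲]
    [MeasurableSpace.CountableOrCountablyGenerated 𝒳 𝒲]
    (μ : Measure (𝒴 × 𝒲)) [IsFiniteMeasure μ] (hg : Measurable g)
    (η : Kernel 𝒳 𝒲) [IsFiniteKernel η]
    (κY : Kernel 𝒴 𝒲) [IsFiniteKernel κY] (hκY : μ.fst ⊗ₘ κY = μ)
    (κX : Kernel 𝒳 𝒲) [IsFiniteKernel κX]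
    (hκX : (μ.map fun p ↦ (g p.1, p.2)).fst ⊗ₘ κX = μ.map fun p ↦ (g p.1, p.2)) :
    ∫⁻ x, klDiv (κX x) (η x) ∂(μ.map fun p ↦ (g p.1, p.2)).fst
      ≤ ∫⁻ y, klDiv (κY y) (η (g y)) ∂μ.fst := by
  set G : 𝒴 × 𝒲 → 𝒳 × 𝒲 := fun p ↦ (g p.1, p.2)
  have hG : Measurable G := by fun_prop
  have map_reference : (μ.fst ⊗ₘ η.comap g hg).map G = (μ.map G).fst ⊗ₘ η := by
    rw [map_compProd_comap, fst_map_prodMap_id μ hg]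
  calc ∫⁻ x, klDiv (κX x) (η x) ∂(μ.map G).fst
    _ = klDiv (μ.map G) ((μ.fst ⊗ₘ η.comap g hg).map G) := by
        rw [← klDiv_compProd_right_s2, hκX, map_reference]
    _ ≤ klDiv μ (μ.fst ⊗ₘ η.comap g hg) := klDiv_map_le _ _ hG
    _ = klDiv (μ.fst ⊗ₘ κY) (μ.fst ⊗ₘ η.comap g hg) := by rw [hκY]
    _ = ∫⁻ y, klDiv (κY y) (η (g y)) ∂μ.fst := klDiv_compProd_right_s2 _ _ _

end Coarsening

/-- Coarsening the conditioning does not increase the conditional relative entropy: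
if `μ'` is the pushforward of `μ` under `(y, w) ↦ (g y, w)`, and `κY`, `κX` are the
disintegration kernels of `μ` and `μ'`, then
`∫ D(κX(x) ‖ R) d(μ'∘fst⁻¹) ≤ ∫ D(κY(y) ‖ R) d(μ∘fst⁻¹)`. -/
theorem coarsening_decreases_conditional_relative_entropy
    {𝒴 𝒳 𝒲 : Type*} [MeasurableSpace 𝒴] [StandardBorelSpace 𝒴]
    [MeasurableSpace 𝒳] [StandardBorelSpace 𝒳]
    [MeasurableSpace 𝒲] [StandardBorelSpace 𝒲]
    (μ : Measure (𝒴 × 𝒲)) [IsProbabilityMeasure μ]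
    (g : 𝒴 → 𝒳) (hg : Measurable g)
    (R : Measure 𝒲) [IsProbabilityMeasure R]
    (κY : Kernel 𝒴 𝒲) [IsMarkovKernel κY] (hκY : μ.fst ⊗ₘ κY = μ)
    (κX : Kernel 𝒳 𝒲) [IsMarkovKernel κX]
    (hκX : (μ.map fun p => (g p.1, p.2)).fst ⊗ₘ κX = μ.map fun p => (g p.1, p.2)) :
    ∫⁻ x, klDiv (κX x) R ∂(μ.map fun p => (g p.1, p.2)).fst
      ≤ ∫⁻ y, klDiv (κY y) R ∂μ.fst := by
  exact coarsening_decreases_conditional_relative_entropy_general μ hg (Kernel.const 𝒳 R)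
    κY hκY κX hκX
end
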